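/- Let I=(G,ω,s,t,R) be a feasible s-t-RPP instance with s≠t and s,t non-adjacent in G=(V,E), and let I'=(G',ω',R') be the RPP instance obtained from I by adding the edge {s,t} with weight 2·ω(E) to both E and R. Then I' is feasible and the minimum weight of a feasible solution of I' equals the minimum weight of a feasible solution of I plus 2·ω(E). -/

import Mathlib

namespace HCPPFormal

variable {V : Type} [DecidableEq V]

/-- The degree of a vertex in a multigraph given as a multiset of edges
(loops count twice, multiplicities are counted). -/
def mDeg (M : Multiset (Sym2 V)) (v : V) : ℕ :=
  (M.map fun e => if e = Sym2.diag v then 2 else if v ∈ e then 1 else 0).sum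

/-- The vertex set of the multigraph induced by a multiset of edges. -/
def mVerts (M : Multiset (Sym2 V)) : Set V := {v | ∃ e ∈ M, v ∈ e}

/-- Adjacency in the multigraph induced by a multiset of edges. -/
def mAdj (M : Multiset (Sym2 V)) (a b : V) : Prop := s(a, b) ∈ M

/-- The multigraph induced by a multiset of edges is connected. -/
def mConnected (M : Multiset (Sym2 V)) : Prop :=
  ∀ u ∈ mVerts M, ∀ v ∈ mVerts M, Relation.ReflTransGen (mAdj M) u v

/-- The list of edges traversed by a walk, given as its list of vertices. -/
def walkEdgeList (w : List V) : List (Sym2 V) :=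
  (w.zip w.tail).map fun p => s(p.1, p.2)

/-- The multiset of edges traversed by a walk (with multiplicities). -/
def walkEdges (w : List V) : Multiset (Sym2 V) :=
  (walkEdgeList w : Multiset (Sym2 V))

/-- The weight of a multiset of edges. -/
def mWeight (ω : Sym2 V → ℕ) (M : Multiset (Sym2 V)) : ℕ := (M.map ω).sum

/-- The weight of a walk. -/
def wWeight (ω : Sym2 V → ℕ) (w : List V) : ℕ := mWeight ω (walkEdges w)

/-- A multiset `M` of edges is a perfect matching on the vertex set `U`:
it is a set of pairwise vertex-disjoint non-loop edges
whose endpoints are exactly the vertices of `U`. -/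
def IsPerfectMatchingOn (M : Multiset (Sym2 V)) (U : Set V) : Prop :=
  M.Nodup ∧ (∀ e ∈ M, ¬ e.IsDiag) ∧
  (∀ e ∈ M, ∀ e' ∈ M, e ≠ e' → ∀ v : V, v ∈ e → v ∉ e') ∧
  mVerts M = U


/-- The edge set of the complete graph on the (finite) vertex type `V`. -/
def completeEdges (V : Type) [Fintype V] [DecidableEq V] : Finset (Sym2 V) :=
  Finset.univ.filter fun e => ¬ e.IsDiag

/-- A feasible solution of the s-t-RPP instance `(G, ω, s, t, R)` with edge set `E`:
a walk from `s` to `t` in `G` traversing every edge of `R` at least once. -/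
def STSol (E R : Finset (Sym2 V)) (s t : V) (w : List V) : Prop :=
  w ≠ [] ∧ w.Chain' (fun a b => s(a, b) ∈ E) ∧
  w.head? = some s ∧ w.getLast? = some t ∧
  ∀ e ∈ R, e ∈ walkEdges w

/-- A feasible solution of the RPP instance with edge set `E` and required edges `R`:
a closed walk traversing every edge of `R` at least once. -/
def RPPSol (E R : Finset (Sym2 V)) (w : List V) : Prop :=
  w ≠ [] ∧ w.Chain' (fun a b => s(a, b) ∈ E) ∧
  w.head? = w.getLast? ∧
  ∀ e ∈ R, e ∈ walkEdges w

/-- The set `S` of those vertices outside `{s, t}` that are imbalanced in `⟨G⟩(R ∪ T)`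
together with those vertices of `{s, t}` that are balanced in `⟨G⟩(R ∪ T)`. -/
def stS (R T : Finset (Sym2 V)) (s t : V) : Set V :=
  {v | (v ≠ s ∧ v ≠ t ∧ ¬ Even (mDeg (R ∪ T).val v)) ∨
       ((v = s ∨ v = t) ∧ Even (mDeg (R ∪ T).val v))}

/-- Darts of a walk. -/
def darts {α : Type} (w : List α) : List (α × α) := w.zip w.tail

lemma darts_cons {α : Type} (a b : α) (l : List α) :
    darts (a :: b :: l) = (a, b) :: darts (b :: l) := rfl

lemma wel_cons {α : Type} (a b : α) (l : List α) :
    walkEdgeList (a :: b :: l) = s(a, b) :: walkEdgeList (b :: l) := rfl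

lemma wel_eq {α : Type} (w : List α) :
    walkEdgeList w = (darts w).map fun p => s(p.1, p.2) := rfl

lemma darts_append {α : Type} (A : List α) (x : α) (B : List α) :
    darts (A ++ x :: B) = darts (A ++ [x]) ++ darts (x :: B) := by
  induction A with
  | nil => simp [darts]
  | cons a A ih =>
    cases A with
    | nil => simp [darts]
    | cons b A =>
      simp only [List.cons_append, darts_cons] at ih ⊢
      rw [ih]

lemma wel_append {α : Type} (A : List α) (x : α) (B : List α) :
    walkEdgeList (A ++ x :: B) = walkEdgeList (A ++ [x]) ++ walkEdgeList (x :: B) := by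
  simp only [wel_eq, darts_append A x B, List.map_append]

lemma wel_reverse {α : Type} (w : List α) :
    walkEdgeList w.reverse = (walkEdgeList w).reverse := by
  induction w with
  | nil => rfl
  | cons a w ih =>
    cases w with
    | nil => rfl
    | cons b w =>
      rw [wel_cons, List.reverse_cons (a := s(a, b)), ← ih, List.reverse_cons, List.reverse_cons,
        List.append_assoc, List.singleton_append, wel_append]
      simp [walkEdgeList, Sym2.eq_swap]

lemma chain_iff {α : Type} (E : Finset (Sym2 α)) (w : List α) :
    w.IsChain (fun a b => s(a, b) ∈ E) ↔ ∀ e ∈ walkEdgeList w, e ∈ E := by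
  induction w with
  | nil => simp [walkEdgeList]
  | cons a w ih =>
    cases w with
    | nil => simp [walkEdgeList]
    | cons b w => rw [wel_cons, List.isChain_cons_cons, ih]; simp

lemma darts_split {α : Type} (p : α × α) (w : List α) (h : p ∈ darts w) :
    ∃ A B, w = A ++ p.1 :: p.2 :: B ∧ p ∉ darts (A ++ [p.1]) := by
  classical
  induction w with
  | nil => simp [darts] at h
  | cons a w ih =>
    cases w with
    | nil => simp [darts] at h
    | cons b w =>
      by_cases hp : p = (a, b)
      · exact ⟨[], w, by simp [hp], by simp [darts]⟩
      · rw [darts_cons, List.mem_cons] at h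
        obtain ⟨A, B, h1, h2⟩ := ih (h.resolve_left hp)
        refine ⟨a :: A, B, by simp [h1], ?_⟩
        cases A with
        | nil =>
          simp at h1
          simp only [List.cons_append, List.nil_append, darts, List.tail_cons, List.zip_cons_cons,
            List.zip_nil_right, List.mem_singleton]
          rw [← h1.1]
          exact hp
        | cons c A =>
          simp at h1
          simp only [List.cons_append, darts_cons, List.mem_cons, not_or] at h2 ⊢
          rw [← h1.1] at h2 ⊢
          exact ⟨hp, h2⟩

lemma count_darts {α : Type} [DecidableEq α] (a b : α) (w : List α) :
    (walkEdgeList w).count s(a, b) ≤ (darts w).count (a, b) + (darts w).count (b, a) := by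
  rw [wel_eq]
  induction darts w with
  | nil => simp
  | cons p l ih =>
    obtain ⟨x, y⟩ := p
    simp only [List.map_cons, List.count_cons, beq_iff_eq, Sym2.eq_iff, Prod.mk.injEq]
    grind

lemma flip_dart {α : Type} [DecidableEq α] (a b : α) (hab : a ≠ b) (w : List α)
    (h : 2 ≤ (darts w).count (a, b)) :
    ∃ w' : List α, w'.head? = w.head? ∧ w'.getLast? = w.getLast? ∧
      (walkEdgeList w).Perm (s(a, b) :: s(a, b) :: walkEdgeList w') := by
  obtain ⟨A, B, rfl, h2⟩ := darts_split (a, b) w (List.count_pos_iff.1 (by omega))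
  simp only at h h2 ⊢
  rw [darts_append, List.count_append, List.count_eq_zero_of_not_mem h2, darts_cons,
    List.count_cons_self] at h
  obtain ⟨A2, B2, h3, -⟩ := darts_split (a, b) (b :: B) (List.count_pos_iff.1 (by omega))
  simp only at h3
  cases A2 with
  | nil => simp at h3; exact absurd h3.1.symm hab
  | cons c C =>
    simp only [List.cons_append, List.cons.injEq] at h3
    obtain ⟨rfl, rfl⟩ := h3
    refine ⟨A ++ a :: (C.reverse ++ b :: B2), by cases A <;> simp,
      by simp [List.getLast?_append, List.getLast?_cons], ?_⟩
    have e1 : walkEdgeList (A ++ a :: b :: (C ++ a :: b :: B2)) =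
        walkEdgeList (A ++ [a]) ++ (s(a,b) :: (walkEdgeList (b :: C ++ [a]) ++
          (s(a,b) :: walkEdgeList (b :: B2)))) := by
      rw [wel_append, wel_cons, ← List.cons_append, wel_append (b :: C), wel_cons]
    have e2 : walkEdgeList (A ++ a :: (C.reverse ++ b :: B2)) =
        walkEdgeList (A ++ [a]) ++ ((walkEdgeList (b :: C ++ [a])).reverse ++
          walkEdgeList (b :: B2)) := by
      rw [wel_append, ← List.cons_append, wel_append (a :: C.reverse), ← wel_reverse]
      simp
    rw [e1, e2, ← Multiset.coe_eq_coe]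
    simp only [← Multiset.coe_add, ← Multiset.cons_coe, Multiset.coe_reverse]
    simp only [← Multiset.singleton_add]
    abel

lemma shorten {α : Type} [DecidableEq α] (n : ℕ) : ∀ w : List α, (walkEdgeList w).length ≤ n →
    (∀ e ∈ walkEdgeList w, ¬ e.IsDiag) →
    ∃ w' : List α, w'.head? = w.head? ∧ w'.getLast? = w.getLast? ∧
      (∀ e, e ∈ walkEdgeList w' ↔ e ∈ walkEdgeList w) ∧
      ∀ e, (walkEdgeList w').count e ≤ 2 := by
  induction n with
  | zero =>
    intro w hw _
    refine ⟨w, rfl, rfl, fun _ => Iff.rfl, fun e => ?_⟩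
    have := List.count_le_length (a := e) (l := walkEdgeList w)
    omega
  | succ n ih =>
    intro w hw hd
    by_cases hc : ∀ e, (walkEdgeList w).count e ≤ 2
    · exact ⟨w, rfl, rfl, fun _ => Iff.rfl, hc⟩
    push Not at hc
    obtain ⟨e, he⟩ := hc
    have hm : e ∈ walkEdgeList w := List.count_pos_iff.1 (by omega)
    have key : ∃ w' : List α, w'.head? = w.head? ∧ w'.getLast? = w.getLast? ∧
        (walkEdgeList w).Perm (e :: e :: walkEdgeList w') := by
      induction e using Sym2.ind with
      | _ a b =>
        have hab : a ≠ b := by simpa using hd _ hm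
        have := count_darts a b w
        by_cases h1 : 2 ≤ (darts w).count (a, b)
        · exact flip_dart a b hab w h1
        · rw [Sym2.eq_swap]
          exact flip_dart b a hab.symm w (by omega)
    obtain ⟨w', h1, h2, h3⟩ := key
    have hmem : ∀ f, f ∈ walkEdgeList w' ↔ f ∈ walkEdgeList w := by
      intro f
      rw [h3.mem_iff]
      have h4 := h3.count_eq e
      simp only [List.count_cons_self] at h4
      have : e ∈ walkEdgeList w' := List.count_pos_iff.1 (by omega)
      constructor
      · intro h; simp [h]
      · intro h
        simp only [List.mem_cons] at h
        rcases h with rfl | rfl | h <;> assumption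
    have hl := h3.length_eq
    simp only [List.length_cons] at hl
    obtain ⟨w'', g1, g2, g3, g4⟩ := ih w' (by omega) (fun f hf => hd f ((hmem f).1 hf))
    exact ⟨w'', g1.trans h1, g2.trans h2, fun f => (g3 f).trans (hmem f), g4⟩

lemma cheap {α : Type} [DecidableEq α] (E R : Finset (Sym2 α)) (ω : Sym2 α → ℕ) (s t : α)
    (hd : ∀ e ∈ E, ¬ e.IsDiag) (w : List α) (hw : STSol E R s t w) :
    ∃ w', STSol E R s t w' ∧ wWeight ω w' ≤ 2 * ∑ x ∈ E, ω x := by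
  obtain ⟨h0, h1, h2, h3, h4⟩ := hw
  have h1 := (chain_iff E w).1 h1
  obtain ⟨w', g1, g2, g3, g4⟩ := shorten _ w le_rfl (fun e he => hd e (h1 e he))
  refine ⟨w', ⟨?_, (chain_iff E w').2 (fun e he => h1 e ((g3 e).1 he)), g1.trans h2,
    g2.trans h3, fun e he => ?_⟩, ?_⟩
  · rintro rfl; simp [h2] at g1
  · exact (g3 e).2 (h4 e he)
  · have hle : walkEdges w' ≤ 2 • E.val := by
      rw [Multiset.le_iff_count]
      intro e
      rw [Multiset.count_nsmul]
      by_cases he : e ∈ walkEdgeList w'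
      · have hE := h1 e ((g3 e).1 he)
        have := g4 e
        rw [Multiset.count_eq_one_of_mem E.nodup hE]
        simpa [walkEdges] using this
      · simp [walkEdges, List.count_eq_zero_of_not_mem he]
    obtain ⟨u, hu⟩ := Multiset.le_iff_exists_add.1 hle
    have := congrArg (fun M => (Multiset.map ω M).sum) hu
    simp only [Multiset.map_nsmul, Multiset.sum_nsmul, Multiset.map_add, Multiset.sum_add,
      smul_eq_mul] at this
    unfold wWeight mWeight
    change 2 * ∑ x ∈ E, ω x = _ at this
    omega

lemma weight_cons {α : Type} (ω : Sym2 α → ℕ) (w w' : List α) (e : Sym2 α)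
    (h : (walkEdgeList w).Perm (e :: walkEdgeList w')) : wWeight ω w = ω e + wWeight ω w' := by
  have := (h.map ω).sum_eq
  simpa [wWeight, mWeight, walkEdges] using this

lemma weight_congr {α : Type} (ω ω' : Sym2 α → ℕ) (w : List α)
    (h : ∀ e ∈ walkEdgeList w, ω' e = ω e) : wWeight ω' w = wWeight ω w := by
  simp only [wWeight, mWeight, walkEdges, Multiset.map_coe, Multiset.sum_coe]
  rw [List.map_congr_left h]

/-- Cut a closed walk open at an edge. -/
lemma cut {α : Type} (a b : α) (W : List α) (hc : W.head? = W.getLast?)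
    (h : s(a, b) ∈ walkEdgeList W) :
    ∃ w : List α, w.head? = some a ∧ w.getLast? = some b ∧
      (walkEdgeList W).Perm (s(a, b) :: walkEdgeList w) := by
  have main : ∀ x y : α, (x, y) ∈ darts W → ∃ w : List α, w.head? = some y ∧
      w.getLast? = some x ∧ (walkEdgeList W).Perm (s(x, y) :: walkEdgeList w) := by
    intro x y hxy
    obtain ⟨A, B, rfl, -⟩ := darts_split (x, y) W hxy
    simp only at hc ⊢
    cases A with
    | nil =>
      refine ⟨y :: B, rfl, ?_, ?_⟩
      · simpa [List.getLast?_cons_cons] using hc.symm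
      · simp [wel_cons]
    | cons c C =>
      have hc' : (y :: B).getLast? = some c := by
        simpa [List.getLast?_append, List.getLast?_cons] using hc.symm
      obtain ⟨D, hD⟩ := List.getLast?_eq_some_iff.1 hc'
      refine ⟨D ++ c :: (C ++ [x]), ?_, by simp [List.getLast?_append, List.getLast?_cons], ?_⟩
      · have : (D ++ c :: (C ++ [x])) = (y :: B) ++ (C ++ [x]) := by rw [hD]; simp
        rw [this]; rfl
      · rw [wel_append (c :: C), wel_cons, wel_append D, ← hD, ← Multiset.coe_eq_coe]
        simp only [← Multiset.coe_add, ← Multiset.cons_coe, List.cons_append]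
        simp only [← Multiset.singleton_add]
        abel
  rw [wel_eq, List.mem_map] at h
  obtain ⟨⟨x, y⟩, hm, he⟩ := h
  obtain ⟨w, h1, h2, h3⟩ := main x y hm
  simp only at he
  rw [he] at h3
  rcases Sym2.eq_iff.1 he with ⟨rfl, rfl⟩ | ⟨rfl, rfl⟩
  · refine ⟨w.reverse, by simpa using h2, by simpa using h1, ?_⟩
    rw [wel_reverse]
    exact h3.trans ((List.reverse_perm _).symm.cons _)
  · exact ⟨w, h1, h2, h3⟩

/-- Let `I = (G, ω, s, t, R)` be a feasible s-t-RPP instance with `s ≠ t` and `s, t`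
non-adjacent in `G = (V, E)`, and let `I' = (G', ω', R')` be the RPP instance obtained
from `I` by adding the edge `{s, t}` with weight `2·ω(E)` to both `E` and `R`. Then `I'`
is feasible and the minimum weight of a feasible solution of `I'` equals the minimum
weight of a feasible solution of `I` plus `2·ω(E)`. -/
theorem reduction_to_rpp_value {V : Type} [DecidableEq V]
    (E R : Finset (Sym2 V)) (ω : Sym2 V → ℕ) (s t : V) (hst : s ≠ t)
    (hd : ∀ e ∈ E, ¬ e.IsDiag) (hRE : R ⊆ E) (hadj : s(s, t) ∉ E)
    (hfeas : ∃ w : List V, STSol E R s t w)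
    (ω' : Sym2 V → ℕ)
    (hω' : ω' = fun e => if e = s(s, t) then 2 * ∑ x ∈ E, ω x else ω e) :
    (∃ W : List V, RPPSol (insert s(s, t) E) (insert s(s, t) R) W) ∧
    sInf {c : ℕ | ∃ W : List V,
        RPPSol (insert s(s, t) E) (insert s(s, t) R) W ∧ wWeight ω' W = c} =
      sInf {c : ℕ | ∃ w : List V, STSol E R s t w ∧ wWeight ω w = c} +
        2 * ∑ x ∈ E, ω x := by
  have hω1 : ω' s(s, t) = 2 * ∑ x ∈ E, ω x := by simp [hω']
  have hω2 : ∀ e, e ≠ s(s, t) → ω' e = ω e := by intro e he; simp [hω', he]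
  have fwd : ∀ w, STSol E R s t w → ∃ W,
      RPPSol (insert s(s, t) E) (insert s(s, t) R) W ∧
      wWeight ω' W = wWeight ω w + 2 * ∑ x ∈ E, ω x := by
    rintro w ⟨h0, h1, h2, h3, h4⟩
    have h1 := (chain_iff E w).1 h1
    obtain ⟨l, rfl⟩ : ∃ l, w = s :: l := by
      cases w with
      | nil => simp at h2
      | cons a l => simp at h2; exact ⟨l, by rw [h2]⟩
    have hE : walkEdgeList (t :: s :: l) = s(s, t) :: walkEdgeList (s :: l) := by
      rw [wel_cons, Sym2.eq_swap]
    refine ⟨t :: s :: l, ⟨by simp, (chain_iff _ _).2 ?_, ?_, ?_⟩, ?_⟩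
    · intro e he
      rw [hE, List.mem_cons] at he
      rw [Finset.mem_insert]
      exact he.imp id (h1 e)
    · rw [List.getLast?_cons_cons, h3]; rfl
    · intro e he
      rw [Finset.mem_insert] at he
      change e ∈ walkEdgeList _
      rw [hE, List.mem_cons]
      exact he.imp id (h4 e)
    · rw [weight_cons ω' _ (s :: l) s(s, t) (by rw [hE]), hω1, add_comm]
      rw [weight_congr ω ω' (s :: l)]
      intro e he
      exact hω2 e (fun h => hadj (h ▸ h1 e he))
  have bwd : ∀ W, RPPSol (insert s(s, t) E) (insert s(s, t) R) W →
      ∃ w, STSol E R s t w ∧ wWeight ω w + 2 * ∑ x ∈ E, ω x ≤ wWeight ω' W := by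
    rintro W ⟨h0, h1, h2, h3⟩
    have h1 := (chain_iff _ W).1 h1
    obtain ⟨w, g1, g2, g3⟩ := cut s t W h2 (h3 _ (Finset.mem_insert_self _ _))
    have hW := weight_cons ω' _ _ _ g3
    by_cases hm : s(s, t) ∈ walkEdgeList w
    · obtain ⟨w0, hw0⟩ := hfeas
      obtain ⟨w1, hw1, hw2⟩ := cheap E R ω s t hd w0 hw0
      refine ⟨w1, hw1, ?_⟩
      have hge : ω' s(s, t) ≤ wWeight ω' w := by
        simp only [wWeight, mWeight, walkEdges, Multiset.map_coe, Multiset.sum_coe]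
        exact List.le_sum_of_mem (List.mem_map_of_mem hm)
      omega
    · refine ⟨w, ⟨?_, (chain_iff _ _).2 ?_, g1, g2, ?_⟩, ?_⟩
      · rintro rfl; simp at g1
      · intro e he
        have h4 := h1 e (g3.mem_iff.2 (List.mem_cons_of_mem _ he))
        rcases Finset.mem_insert.1 h4 with rfl | h4
        · exact absurd he hm
        · exact h4
      · intro e he
        have h4 : e ∈ walkEdgeList W := h3 e (Finset.mem_insert_of_mem he)
        rcases List.mem_cons.1 (g3.mem_iff.1 h4) with rfl | h4
        · exact absurd (hRE he) hadj
        · exact h4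
      · rw [hW, hω1, weight_congr ω ω' w, add_comm]
        intro e he
        exact hω2 e (fun h => hm (h ▸ he))
  obtain ⟨w0, hw0⟩ := hfeas
  obtain ⟨W0, hW0, -⟩ := fwd w0 hw0
  refine ⟨⟨W0, hW0⟩, le_antisymm ?_ ?_⟩
  · obtain ⟨w, hw, hc⟩ := Nat.sInf_mem
      (s := {c : ℕ | ∃ w : List V, STSol E R s t w ∧ wWeight ω w = c}) ⟨_, w0, hw0, rfl⟩
    obtain ⟨W, hW, hWc⟩ := fwd w hw
    rw [← hc, ← hWc]
    exact Nat.sInf_le ⟨W, hW, rfl⟩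
  · obtain ⟨W, hW, hc⟩ := Nat.sInf_mem
      (s := {c : ℕ | ∃ W : List V, RPPSol (insert s(s, t) E) (insert s(s, t) R) W ∧
        wWeight ω' W = c}) ⟨_, W0, hW0, rfl⟩
    obtain ⟨w, hw, hwc⟩ := bwd W hW
    rw [← hc]
    have hle : sInf {c : ℕ | ∃ w : List V, STSol E R s t w ∧ wWeight ω w = c} ≤ wWeight ω w :=
      Nat.sInf_le ⟨w, hw, rfl⟩
    omega

end HCPPFormal
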